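/- Let g = (a ⊕ r) ⋉ n where r is semisimple, a is abelian, n is an abelian ideal, [a, r] = 0, and the inner product makes a ⊕ r ⊕ n orthogonal with: ad Y|_n skew-symmetric for Y in a subspace k ⊆ r and symmetric for Y in p (where r = k ⊕ p is a Cartan decomposition), ad A|_n normal for all A ∈ a, and Ric_r < 0 on r with Ric_r(k, p) = 0. Choose a basis {A₁,…,A_k} of a, orthonormal for the chosen inner product on a, with tr(ad A_i|_n) = 0 for i ≥ 2 and all eigenvalues of ad A₁|_n having positive real part. Then the mean curvature vector is H = tr(ad A₁|_n)·A₁, and Ric|_n = −tr(ad A₁|_n)·S(ad A₁|_n) is negative definite on n. -/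

import Mathlib

open scoped RealInnerProductSpace

/-!
Write `g = U ⊕ n` with `U = a ⊕ r = nᗮ` a subalgebra. For `X` in the abelian ideal `n` the trace
term of the Ricci form vanishes, and the two double sums reduce to half the sum of the commutators
of `ad u|_n` with its adjoint, over an orthonormal basis of vectors `u`, plus a positive
semidefinite term measuring the `n`-components of brackets in `U`. The latter vanishes as `U` is a
subalgebra, the former once the basis is adapted to `a ⊕ k ⊕ p ⊕ n`, on each summand of which
`ad|_n` is normal. Only the mean curvature term is left.

The commutators being traceless, the Ricci form without its mean curvature term has nonnegative
trace on every abelian ideal. Hence `Ric_r < 0` leaves no nonzero abelian ideal in `r`, so `r` is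
semisimple and `tr ad` vanishes on it. As `tr ad` also vanishes on `n`, the vector `H` lies in `a`,
along `A₁`. Finally a normal endomorphism whose eigenvalues have positive real part has positive
definite symmetric part.
-/

section PositiveStable

/-- A real endomorphism is positive stable if all its complex eigenvalues, taken as roots of the
characteristic polynomial, have positive real part. -/
def IsPositiveStable {V : Type*} [AddCommGroup V] [Module ℝ V] [FiniteDimensional ℝ V]
    (T : V →ₗ[ℝ] V) : Prop :=
  ∀ z : ℂ, (T.charpoly.map (algebraMap ℝ ℂ)).IsRoot z → 0 < z.re

section Module

variable {V : Type*} [AddCommGroup V] [Module ℝ V] [FiniteDimensional ℝ V] {T : V →ₗ[ℝ] V}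

theorem isPositiveStable_iff_forall_hasEigenvalue :
    IsPositiveStable T ↔ ∀ z, Module.End.HasEigenvalue (T.baseChange ℂ) z → 0 < z.re := by
  simp only [IsPositiveStable, Module.End.hasEigenvalue_iff_isRoot_charpoly,
    LinearMap.charpoly_baseChange]

theorem IsPositiveStable.trace_pos [Nontrivial V] (hT : IsPositiveStable T) :
    0 < LinearMap.trace ℝ V T := by
  rw [isPositiveStable_iff_forall_hasEigenvalue] at hT
  set roots := (T.baseChange ℂ).charpoly.roots
  have htrace : LinearMap.trace ℝ V T = (roots.map Complex.reAddGroupHom).sum := by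
    rw [← map_multiset_sum, ← Module.End.trace_eq_sum_roots_charpoly_of_splits
      (IsAlgClosed.splits _), LinearMap.trace_baseChange]
    rfl
  have hmem (z : ℂ) : z ∈ roots ↔ Module.End.HasEigenvalue (T.baseChange ℂ) z := by
    rw [Module.End.hasEigenvalue_iff_isRoot_charpoly,
      Polynomial.mem_roots (LinearMap.charpoly_monic _).ne_zero]
  have hne : roots ≠ ∅ := by
    obtain ⟨z, hz⟩ := Module.End.exists_eigenvalue (T.baseChange ℂ)
    exact fun hempty => Multiset.eq_zero_iff_forall_notMem.mp hempty z ((hmem z).mpr hz)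
  rw [htrace, ← Multiset.sum_map_zero (m := roots)]
  exact Multiset.sum_lt_sum_of_nonempty hne fun z hz => hT z ((hmem z).mp hz)

theorem IsPositiveStable.restrict (hT : IsPositiveStable T) {W : Submodule ℝ V}
    (hW : ∀ x ∈ W, T x ∈ W) : IsPositiveStable (T.restrict hW) := by
  rw [isPositiveStable_iff_forall_hasEigenvalue] at hT ⊢
  intro z hz
  obtain ⟨v, hv⟩ := hz.exists_hasEigenvector
  have hinj : Function.Injective (W.subtype.baseChange ℂ) :=
    Module.Flat.lTensor_preserves_injective_linearMap _ W.injective_subtype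
  refine hT z (Module.End.hasEigenvalue_of_hasEigenvector (x := W.subtype.baseChange ℂ v)
    ⟨Module.End.mem_eigenspace_iff.mpr ?_, (map_ne_zero_iff _ hinj).mpr hv.2⟩)
  rw [← map_smul, ← hv.apply_eq_smul, ← LinearMap.comp_apply, ← LinearMap.comp_apply,
    ← LinearMap.baseChange_comp, ← LinearMap.baseChange_comp]
  rfl

end Module

variable {F : Type*} [NormedAddCommGroup F] [InnerProductSpace ℝ F] [FiniteDimensional ℝ F]

theorem inner_add_star_apply (T : F →ₗ[ℝ] F) (x y : F) :
    ⟪(T + star T) x, y⟫ = ⟪T x, y⟫ + ⟪x, T y⟫ := by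
  rw [LinearMap.add_apply, inner_add_left, LinearMap.star_eq_adjoint, LinearMap.adjoint_inner_left]

theorem inner_apply_self_pos_of_forall_hasEigenvalue_pos {S : F →ₗ[ℝ] F} (hS : S.IsSymmetric)
    (hpos : ∀ l, Module.End.HasEigenvalue S l → 0 < l) {x : F} (hx : x ≠ 0) : 0 < ⟪S x, x⟫ := by
  set e := hS.eigenvectorBasis rfl
  have hval (i) : 0 < hS.eigenvalues rfl i := hpos _ (hS.hasEigenvalue_eigenvalues rfl i)
  have hexpand : ⟪S x, x⟫ = ∑ i, hS.eigenvalues rfl i * ⟪e i, x⟫ ^ 2 := by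
    rw [← e.sum_inner_mul_inner]
    refine Finset.sum_congr rfl fun i _ => ?_
    rw [hS, hS.apply_eigenvectorBasis, RCLike.ofReal_real_eq_id, id, real_inner_smul_right,
      real_inner_comm]
    ring
  obtain ⟨i, hi⟩ : ∃ i, ⟪e i, x⟫ ≠ 0 := by
    by_contra! hall
    exact hx (InnerProductSpace.ext_inner_left_basis e.toBasis fun i => by simpa using hall i)
  rw [hexpand]
  exact Finset.sum_pos' (fun j _ => mul_nonneg (hval j).le (sq_nonneg _))
    ⟨i, Finset.mem_univ i, mul_pos (hval i) (sq_pos_of_ne_zero hi)⟩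

-- An eigenspace of `T + T*` is `T`-invariant, and the trace of `T` on it is `l / 2` times its
-- dimension.
theorem IsPositiveStable.pos_of_hasEigenvalue_add_star {T : F →ₗ[ℝ] F} [IsStarNormal T]
    (hT : IsPositiveStable T) {l : ℝ} (hl : Module.End.HasEigenvalue (T + star T) l) : 0 < l := by
  set W := Module.End.eigenspace (T + star T) l
  have : Nontrivial W := Submodule.nontrivial_iff_ne_bot.mpr hl
  have hcomm : Commute (T + star T) T := (Commute.refl T).add_left (star_comm_self' T)
  have hW : ∀ x ∈ W, T x ∈ W := Module.End.mapsTo_genEigenspace_of_comm hcomm l 1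
  have hinner (w : W) : ⟪w, T.restrict hW w⟫ = l / 2 * ⟪w, w⟫ := by
    have h2 := inner_add_star_apply T (w : F) w
    rw [Module.End.mem_eigenspace_iff.mp w.2, real_inner_smul_left,
      real_inner_comm (w : F) (T w)] at h2
    rw [Submodule.coe_inner, Submodule.coe_inner, LinearMap.coe_restrict_apply]
    linarith
  have htrace : LinearMap.trace ℝ W (T.restrict hW) = l / 2 * Module.finrank ℝ W := by
    simp [LinearMap.trace_eq_sum_inner _ (stdOrthonormalBasis ℝ W), hinner, mul_comm]
  have hpos : 0 < l / 2 * Module.finrank ℝ W := htrace ▸ (hT.restrict hW).trace_pos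
  linarith [pos_of_mul_pos_left hpos (Nat.cast_nonneg _)]

theorem IsPositiveStable.inner_apply_self_pos {T : F →ₗ[ℝ] F} [IsStarNormal T]
    (hT : IsPositiveStable T) {x : F} (hx : x ≠ 0) : 0 < ⟪T x, x⟫ := by
  have hsymm : (T + star T).IsSymmetric :=
    (LinearMap.isSymmetric_iff_isSelfAdjoint _).mpr (IsSelfAdjoint.add_star_self T)
  have hpos := inner_apply_self_pos_of_forall_hasEigenvalue_pos hsymm
    (fun _ => hT.pos_of_hasEigenvalue_add_star) hx
  rw [inner_add_star_apply, real_inner_comm (T x) x] at hpos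
  linarith

end PositiveStable

theorem sum_inner_mul_inner_orthonormalBasis {ι V : Type*} [Fintype ι] [NormedAddCommGroup V]
    [InnerProductSpace ℝ V] (b : OrthonormalBasis ι ℝ V) (u v : V) :
    ∑ i, ⟪u, b i⟫ * ⟪v, b i⟫ = ⟪u, v⟫ := by
  simp only [real_inner_comm (b _) v, b.sum_inner_mul_inner]

theorem inner_eq_inner_starProjection_add {V : Type*} [NormedAddCommGroup V]
    [InnerProductSpace ℝ V] (U : Submodule ℝ V) [U.HasOrthogonalProjection] (x y : V) :
    ⟪x, y⟫ = ⟪U.starProjection x, U.starProjection y⟫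
      + ⟪Uᗮ.starProjection x, Uᗮ.starProjection y⟫ := by
  rw [U.inner_starProjection_left_eq_right, Uᗮ.inner_starProjection_left_eq_right,
    Submodule.starProjection_eq_self_iff.mpr (U.starProjection_apply_mem y),
    Submodule.starProjection_eq_self_iff.mpr (Uᗮ.starProjection_apply_mem y),
    ← inner_add_right, U.starProjection_add_starProjection_orthogonal]

section Ricci

variable {V : Type*} [NormedAddCommGroup V] [InnerProductSpace ℝ V] [FiniteDimensional ℝ V]
  {ι κ : Type*} [Fintype ι] [Fintype κ]

theorem sum_apply_orthonormalBasis_eq (B : V →ₗ[ℝ] V →ₗ[ℝ] ℝ) (b : OrthonormalBasis ι ℝ V)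
    (c : OrthonormalBasis κ ℝ V) : ∑ i, B (b i) (b i) = ∑ i, B (c i) (c i) := by
  have h := congrArg (TensorProduct.lift B)
    ((InnerProductSpace.canonicalCovariantTensor_eq_sum V b).symm.trans
      (InnerProductSpace.canonicalCovariantTensor_eq_sum V c))
  simpa only [map_sum, TensorProduct.lift.tmul] using h

/-- The Ricci form of the left-invariant metric on a Lie group with bracket `br`, without the mean
curvature term `-(1/2) (⟪[H, x], y⟫ + ⟪x, [H, y]⟫)`; it is the whole Ricci form when the Lie
algebra is unimodular. The usual double sums over an orthonormal basis are contracted here, see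
`unimodularRicci_eq_sum`. -/
noncomputable def unimodularRicci (br : V →ₗ[ℝ] V →ₗ[ℝ] V) (x y : V) : ℝ :=
  let e := stdOrthonormalBasis ℝ V
  ∑ i, (-(1/2) * ⟪br x (e i), br y (e i)⟫ + (1/4) * ⟪star (br (e i)) x, star (br (e i)) y⟫)
    - (1/2) * LinearMap.trace ℝ V (br x ∘ₗ br y)

theorem unimodularRicci_eq (br : V →ₗ[ℝ] V →ₗ[ℝ] V) (b : OrthonormalBasis ι ℝ V) (x y : V) :
    unimodularRicci br x y =
      ∑ i, (-(1/2) * ⟪br x (b i), br y (b i)⟫ + (1/4) * ⟪star (br (b i)) x, star (br (b i)) y⟫)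
        - (1/2) * LinearMap.trace ℝ V (br x ∘ₗ br y) :=
  congrArg (· - _) (sum_apply_orthonormalBasis_eq
    (LinearMap.mk₂ ℝ (fun u v => -(1/2) * ⟪br x u, br y v⟫ + (1/4) * ⟪star (br u) x, star (br v) y⟫)
      (fun u u' v => by simp [inner_add_left]; ring)
      (fun t u v => by simp [real_inner_smul_left]; ring)
      (fun u v v' => by simp [inner_add_right]; ring)
      (fun t u v => by simp [real_inner_smul_right]; ring))
    (stdOrthonormalBasis ℝ V) b)

theorem unimodularRicci_eq_sum (br : V →ₗ[ℝ] V →ₗ[ℝ] V) (b : OrthonormalBasis ι ℝ V) (x y : V) :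
    unimodularRicci br x y =
      -(1/2) * ∑ i, ∑ j, ⟪br x (b i), b j⟫ * ⟪br y (b i), b j⟫
      + (1/4) * ∑ i, ∑ j, ⟪br (b i) (b j), x⟫ * ⟪br (b i) (b j), y⟫
      - (1/2) * LinearMap.trace ℝ V (br x ∘ₗ br y) := by
  have hstar (i j : ι) (z : V) : ⟪br (b i) (b j), z⟫ = ⟪star (br (b i)) z, b j⟫ := by
    rw [LinearMap.star_eq_adjoint, LinearMap.adjoint_inner_left, real_inner_comm]
  simp only [unimodularRicci_eq br b, hstar, sum_inner_mul_inner_orthonormalBasis,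
    Finset.sum_add_distrib, Finset.mul_sum]

theorem sum_inner_star_apply_star_apply {br : V →ₗ[ℝ] V →ₗ[ℝ] V}
    (hskew : ∀ x y, br x y = -br y x) (P : V →ₗ[ℝ] V) (b : OrthonormalBasis ι ℝ V) (x y : V) :
    ∑ i, ⟪star P (star (br (b i)) x), star P (star (br (b i)) y)⟫ =
      ∑ i, ⟪star (br (P (b i))) x, star (br (P (b i))) y⟫ := by
  have hleft (i j : ι) (z : V) : ⟪star P (star (br (b i)) z), b j⟫ = ⟪z, br (b i) (P (b j))⟫ := by
    simp only [LinearMap.star_eq_adjoint, LinearMap.adjoint_inner_left]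
  have hright (i j : ι) (z : V) : ⟪star (br (P (b i))) z, b j⟫ = -⟪z, br (b j) (P (b i))⟫ := by
    rw [LinearMap.star_eq_adjoint, LinearMap.adjoint_inner_left, hskew, inner_neg_right]
  calc ∑ i, ⟪star P (star (br (b i)) x), star P (star (br (b i)) y)⟫
      = ∑ i, ∑ j, ⟪x, br (b i) (P (b j))⟫ * ⟪y, br (b i) (P (b j))⟫ :=
        Finset.sum_congr rfl fun i _ => by
          simp only [← hleft, sum_inner_mul_inner_orthonormalBasis]
    _ = ∑ j, ∑ i, ⟪x, br (b i) (P (b j))⟫ * ⟪y, br (b i) (P (b j))⟫ := Finset.sum_comm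
    _ = ∑ j, ⟪star (br (P (b j))) x, star (br (P (b j))) y⟫ :=
        Finset.sum_congr rfl fun j _ => by
          rw [← sum_inner_mul_inner_orthonormalBasis b]
          simp only [hright, neg_mul_neg]

theorem sum_inner_star_apply_self (T : V →ₗ[ℝ] V) (b : OrthonormalBasis ι ℝ V) :
    ∑ i, ⟪star T (b i), star T (b i)⟫ = ∑ i, ⟪T (b i), T (b i)⟫ := by
  have h := LinearMap.trace_mul_comm ℝ T (star T)
  simpa only [LinearMap.trace_eq_sum_inner _ b, Module.End.mul_apply, LinearMap.star_eq_adjoint,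
    LinearMap.adjoint_inner_right, ← LinearMap.adjoint_inner_left T] using h

section Ideal

variable {I : Submodule ℝ V} {D : V → I →ₗ[ℝ] I} {br : V →ₗ[ℝ] V →ₗ[ℝ] V}

theorem inner_star_apply_star_apply {T : V →ₗ[ℝ] V} {R : I →ₗ[ℝ] I} (hR : ∀ v : I, (R v : V) = T v)
    (x y : I) : ⟪star T x, star T y⟫ = ⟪star R x, star R y⟫
      + ⟪Iᗮ.starProjection (star T x), Iᗮ.starProjection (star T y)⟫ := by
  have hproj (z : I) : I.starProjection (star T z) = star R z := by
    refine Submodule.eq_starProjection_of_mem_of_inner_eq_zero (star R z).2 fun w hw => ?_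
    lift w to I using hw
    rw [inner_sub_left, ← Submodule.coe_inner, LinearMap.star_eq_adjoint, LinearMap.star_eq_adjoint,
      LinearMap.adjoint_inner_left, LinearMap.adjoint_inner_left, Submodule.coe_inner, hR, sub_self]
  rw [inner_eq_inner_starProjection_add I, hproj, hproj, Submodule.coe_inner]

-- Splitting the values of `star (br u)` along `I` and `Iᗮ` gives the `D` terms once; skew-symmetry
-- moves the projection to `Iᗮ` from the values onto `u`, and a second splitting gives them again.
theorem sum_inner_star_apply_star_apply_of_isAbelian (hskew : ∀ x y, br x y = -br y x)
    (hD : ∀ x (v : I), (D x v : V) = br x v) (habel : ∀ x ∈ I, ∀ y ∈ I, br x y = 0)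
    (b : OrthonormalBasis ι ℝ V) (x y : I) :
    ∑ i, ⟪star (br (b i)) x, star (br (b i)) y⟫ =
      2 * ∑ i, ⟪star (D (b i)) x, star (D (b i)) y⟫
      + ∑ i, ⟪Iᗮ.starProjection (star (br (Iᗮ.starProjection (b i))) x),
          Iᗮ.starProjection (star (br (Iᗮ.starProjection (b i))) y)⟫ := by
  set P : V →ₗ[ℝ] V := Iᗮ.starProjection with hP
  have hstarP : star P = P :=
    (LinearMap.isSymmetric_iff_isSelfAdjoint P).mp Iᗮ.starProjection_isSymmetric
  have hDP (u : V) : D (P u) = D u := by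
    ext v
    have hI : br (I.starProjection u) v = 0 := habel _ (I.starProjection_apply_mem u) _ v.2
    rw [hD, hD]
    nth_rw 2 [← I.starProjection_add_starProjection_orthogonal u]
    rw [map_add, LinearMap.add_apply, hI, zero_add, hP, ContinuousLinearMap.coe_coe]
  calc ∑ i, ⟪star (br (b i)) x, star (br (b i)) y⟫
      = ∑ i, ⟪star (D (b i)) x, star (D (b i)) y⟫
        + ∑ i, ⟪star P (star (br (b i)) x), star P (star (br (b i)) y)⟫ := by
        rw [← Finset.sum_add_distrib, hstarP]
        exact Finset.sum_congr rfl fun i _ => inner_star_apply_star_apply (hD (b i)) x y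
    _ = ∑ i, ⟪star (D (b i)) x, star (D (b i)) y⟫
        + ∑ i, ⟪star (br (P (b i))) x, star (br (P (b i))) y⟫ := by
        rw [sum_inner_star_apply_star_apply hskew]
    _ = _ := by
        simp only [inner_star_apply_star_apply (hD (P _)), hDP, Finset.sum_add_distrib]
        rw [← add_assoc, two_mul]
        rfl

theorem unimodularRicci_apply_of_isAbelian (hskew : ∀ x y, br x y = -br y x)
    (hD : ∀ x (v : I), (D x v : V) = br x v) (habel : ∀ x ∈ I, ∀ y ∈ I, br x y = 0)
    (b : OrthonormalBasis ι ℝ V) (x y : I) :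
    unimodularRicci br x y =
      (1/2) * ∑ i, (⟪star (D (b i)) x, star (D (b i)) y⟫ - ⟪D (b i) x, D (b i) y⟫)
      + (1/4) * ∑ i, ⟪Iᗮ.starProjection (star (br (Iᗮ.starProjection (b i))) x),
          Iᗮ.starProjection (star (br (Iᗮ.starProjection (b i))) y)⟫ := by
  have htrace : br x ∘ₗ br y = 0 := by
    ext z
    rw [LinearMap.comp_apply, hskew y, map_neg, ← hD, habel x x.2 _ (D z y).2, neg_zero,
      LinearMap.zero_apply]
  have hfirst (i : ι) : ⟪br x (b i), br y (b i)⟫ = ⟪D (b i) x, D (b i) y⟫ := by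
    rw [hskew x, hskew y, inner_neg_neg, Submodule.coe_inner, hD, hD]
  rw [unimodularRicci_eq br b, htrace, map_zero, Finset.sum_add_distrib, ← Finset.mul_sum,
    ← Finset.mul_sum, sum_inner_star_apply_star_apply_of_isAbelian hskew hD habel]
  simp only [hfirst, Finset.sum_sub_distrib]
  ring

theorem unimodularRicci_eq_zero_of_isStarNormal (hskew : ∀ x y, br x y = -br y x)
    (hD : ∀ x (v : I), (D x v : V) = br x v) (habel : ∀ x ∈ I, ∀ y ∈ I, br x y = 0)
    (hperp : ∀ x ∈ Iᗮ, ∀ y ∈ Iᗮ, br x y ∈ Iᗮ)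
    (b : OrthonormalBasis ι ℝ V) (hnormal : ∀ i, IsStarNormal (D (b i))) (x y : I) :
    unimodularRicci br x y = 0 := by
  have hdiff (i : ι) : ⟪star (D (b i)) x, star (D (b i)) y⟫ = ⟪D (b i) x, D (b i) y⟫ := by
    have hcomm := LinearMap.congr_fun (star_comm_self' (D (b i))) y
    rw [Module.End.mul_apply, Module.End.mul_apply] at hcomm
    rw [LinearMap.star_eq_adjoint, LinearMap.adjoint_inner_left, ← LinearMap.star_eq_adjoint,
      ← hcomm, LinearMap.star_eq_adjoint, LinearMap.adjoint_inner_right]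
  have hproj (u : V) : Iᗮ.starProjection (star (br (Iᗮ.starProjection u)) x) = 0 := by
    rw [Submodule.starProjection_apply_eq_zero_iff]
    intro w hw
    rw [LinearMap.star_eq_adjoint, LinearMap.adjoint_inner_right]
    exact Submodule.inner_left_of_mem_orthogonal x.2
      (hperp _ (Submodule.starProjection_apply_mem _ _) w hw)
  simp only [unimodularRicci_apply_of_isAbelian hskew hD habel b, hdiff, hproj, sub_self,
    inner_zero_left, Finset.sum_const_zero, mul_zero, add_zero]

theorem sum_unimodularRicci_nonneg (hskew : ∀ x y, br x y = -br y x)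
    (hD : ∀ x (v : I), (D x v : V) = br x v) (habel : ∀ x ∈ I, ∀ y ∈ I, br x y = 0)
    (e : OrthonormalBasis ι ℝ I) : 0 ≤ ∑ k, unimodularRicci br (e k) (e k) := by
  simp only [unimodularRicci_apply_of_isAbelian hskew hD habel (stdOrthonormalBasis ℝ V),
    Finset.sum_add_distrib, ← Finset.mul_sum]
  rw [Finset.sum_comm]
  simp only [Finset.sum_sub_distrib, sum_inner_star_apply_self, sub_self, Finset.sum_const_zero,
    mul_zero, zero_add]
  exact mul_nonneg (by norm_num) (Finset.sum_nonneg fun _ _ => Finset.sum_nonneg fun _ _ =>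
    real_inner_self_nonneg)

theorem eq_bot_of_unimodularRicci_neg (hskew : ∀ x y, br x y = -br y x)
    (hideal : ∀ x, ∀ y ∈ I, br x y ∈ I) (habel : ∀ x ∈ I, ∀ y ∈ I, br x y = 0)
    (hneg : ∀ x ∈ I, x ≠ 0 → unimodularRicci br x x < 0) : I = ⊥ := by
  by_contra hI
  have : Nontrivial I := Submodule.nontrivial_iff_ne_bot.mpr hI
  set e := stdOrthonormalBasis ℝ I
  have : Nonempty (Fin (Module.finrank ℝ I)) := e.toBasis.index_nonempty
  refine (sum_unimodularRicci_nonneg hskew (D := fun x => (br x).restrict (hideal x))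
    (fun _ _ => rfl) habel e).not_gt (Finset.sum_neg (fun k _ => ?_) Finset.univ_nonempty)
  exact hneg _ (e k).2 (by simpa using e.orthonormal.ne_zero k)

end Ideal

end Ricci

section Bracket

variable {R V : Type*} [CommRing R] [AddCommGroup V] [Module R V] {br : V →ₗ[R] V →ₗ[R] V}

theorem apply_apply_eq_lie (hskew : ∀ x y, br x y = -br y x)
    (hjac : ∀ x y z, br x (br y z) + br y (br z x) + br z (br x y) = 0) (x y : V) :
    br (br x y) = ⁅br x, br y⁆ := by
  ext z
  have h := hjac x y z
  rw [hskew z x, map_neg, hskew z (br x y)] at h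
  rw [Ring.lie_def, LinearMap.sub_apply, Module.End.mul_apply, Module.End.mul_apply, ← sub_eq_zero,
    ← neg_eq_zero, ← h]
  abel

/-- The restriction of a bracket to a subspace closed under it, with which the Ricci form of a
subalgebra is `unimodularRicci (restrictBracket br r hr)`. -/
def restrictBracket (br : V →ₗ[R] V →ₗ[R] V) (r : Submodule R V)
    (hr : ∀ x ∈ r, ∀ y ∈ r, br x y ∈ r) : r →ₗ[R] r →ₗ[R] r :=
  LinearMap.mk₂ R (fun x y => ⟨br x y, hr x x.2 y y.2⟩)
    (fun _ _ _ => Subtype.ext (by simp)) (fun _ _ _ => Subtype.ext (by simp))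
    (fun _ _ _ => Subtype.ext (by simp)) (fun _ _ _ => Subtype.ext (by simp))

end Bracket

theorem linearForm_eq_zero_of_forall_lie {𝕜 L : Type*} [Field 𝕜] [CharZero 𝕜] [LieRing L]
    [LieAlgebra 𝕜 L] [FiniteDimensional 𝕜 L] [LieAlgebra.HasTrivialRadical 𝕜 L] {χ : L →ₗ[𝕜] 𝕜}
    (hχ : ∀ x y : L, χ ⁅x, y⁆ = 0) : χ = 0 := by
  have hnd := LieAlgebra.IsKilling.killingForm_nondegenerate 𝕜 L
  set z := (LinearMap.BilinForm.toDual _ hnd).symm χ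
  have hz (y : L) : killingForm 𝕜 L z y = χ y :=
    LinearMap.BilinForm.apply_toDual_symm_apply (hB := hnd) χ y
  have hcentral : z ∈ LieAlgebra.center 𝕜 L := by
    rw [LieModule.mem_maxTrivSubmodule]
    refine fun x => hnd.1 _ fun y => ?_
    rw [← lie_skew, map_neg, LinearMap.neg_apply, LieModule.traceForm_apply_lie_apply, hz, hχ,
      neg_zero]
  rw [LieAlgebra.center_eq_bot, LieSubmodule.mem_bot] at hcentral
  ext y
  rw [← hz, hcentral, map_zero]

theorem linearForm_eq_zero_of_forall_bracket {𝕜 V : Type*} [Field 𝕜] [CharZero 𝕜] [AddCommGroup V]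
    [Module 𝕜 V] [FiniteDimensional 𝕜 V] {br : V →ₗ[𝕜] V →ₗ[𝕜] V}
    (hskew : ∀ x y, br x y = -br y x)
    (hjac : ∀ x y z, br x (br y z) + br y (br z x) + br z (br x y) = 0)
    (hideal : ∀ I : Submodule 𝕜 V, (∀ x, ∀ y ∈ I, br x y ∈ I) →
      (∀ x ∈ I, ∀ y ∈ I, br x y = 0) → I = ⊥)
    {χ : V →ₗ[𝕜] 𝕜} (hχ : ∀ x y, χ (br x y) = 0) : χ = 0 := by
  have : IsAddTorsionFree V := .of_isTorsionFree 𝕜 V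
  let _ : LieRing V :=
    { bracket := fun x y => br x y
      add_lie := fun x y z => LinearMap.map_add₂ br x y z
      lie_add := fun x y z => map_add (br x) y z
      lie_self := fun x => self_eq_neg.mp (hskew x x)
      leibniz_lie := fun x y z => by
        change br x (br y z) = br (br x y) z + br y (br x z)
        rw [apply_apply_eq_lie hskew hjac, Ring.lie_def, LinearMap.sub_apply, Module.End.mul_apply,
          Module.End.mul_apply, sub_add_cancel] }
  let _ : LieAlgebra 𝕜 V := { lie_smul := fun t x y => map_smul (br x) t y }
  have : LieAlgebra.HasTrivialRadical 𝕜 V := by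
    rw [LieAlgebra.hasTrivialRadical_iff_no_abelian_ideals]
    intro I hI
    rw [← LieSubmodule.toSubmodule_eq_bot]
    exact hideal _ (fun x y hy => I.lie_mem hy) fun x hx y hy =>
      congrArg Subtype.val (hI.trivial ⟨x, hx⟩ ⟨y, hy⟩)
  exact linearForm_eq_zero_of_forall_lie hχ

theorem trace_apply_eq_zero_of_unimodularRicci_neg {V : Type*} [NormedAddCommGroup V]
    [InnerProductSpace ℝ V] {br : V →ₗ[ℝ] V →ₗ[ℝ] V} (hskew : ∀ x y, br x y = -br y x)
    (hjac : ∀ x y z, br x (br y z) + br y (br z x) + br z (br x y) = 0)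
    {r : Submodule ℝ V} [FiniteDimensional ℝ r] (hr : ∀ x ∈ r, ∀ y ∈ r, br x y ∈ r)
    (hneg : ∀ x : r, x ≠ 0 → unimodularRicci (restrictBracket br r hr) x x < 0) {x : V}
    (hx : x ∈ r) : LinearMap.trace ℝ V (br x) = 0 := by
  have hskew_r (x y : r) : restrictBracket br r hr x y = -restrictBracket br r hr y x :=
    Subtype.ext (hskew x y)
  have hzero : LinearMap.trace ℝ V ∘ₗ br ∘ₗ r.subtype = 0 :=
    linearForm_eq_zero_of_forall_bracket hskew_r (fun x y z => Subtype.ext (hjac x y z))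
      (fun I hideal habel =>
        eq_bot_of_unimodularRicci_neg hskew_r hideal habel fun x _ => hneg x)
      fun x y => (congrArg _ (apply_apply_eq_lie hskew hjac (x : V) y)).trans
        (LinearMap.trace_lie _ _)
  exact LinearMap.congr_fun hzero ⟨x, hx⟩

theorem unimodularRicci_restrictBracket_eq_sum {ι V : Type*} [Fintype ι] [NormedAddCommGroup V]
    [InnerProductSpace ℝ V] {br : V →ₗ[ℝ] V →ₗ[ℝ] V} {r : Submodule ℝ V} [FiniteDimensional ℝ r]
    (hr : ∀ x ∈ r, ∀ y ∈ r, br x y ∈ r) (b : OrthonormalBasis ι ℝ r) (x y : r) :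
    unimodularRicci (restrictBracket br r hr) x y =
      -(1/2) * ∑ i, ∑ j, ⟪br x (b i), (b j : V)⟫ * ⟪br y (b i), (b j : V)⟫
      + (1/4) * ∑ i, ∑ j, ⟪br (b i) (b j), (x : V)⟫ * ⟪br (b i) (b j), (y : V)⟫
      - (1/2) * ∑ i, ⟪br x (br y (b i)), (b i : V)⟫ := by
  rw [unimodularRicci_eq_sum _ b, LinearMap.trace_eq_sum_inner _ b]
  simp only [real_inner_comm _ (b _), LinearMap.comp_apply]
  rfl

section Decomposition

theorem trace_eq_trace_of_forall_mem {𝕜 V : Type*} [Field 𝕜] [AddCommGroup V] [Module 𝕜 V]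
    [FiniteDimensional 𝕜 V] {I : Submodule 𝕜 V} {T : V →ₗ[𝕜] V} (hT : ∀ x, T x ∈ I)
    {R : I →ₗ[𝕜] I} (hR : ∀ v : I, (R v : V) = T v) :
    LinearMap.trace 𝕜 V T = LinearMap.trace 𝕜 I R := by
  rw [← LinearMap.trace_restrict_eq_of_forall_mem I T hT]
  exact congrArg _ (LinearMap.ext fun v => Subtype.ext (hR v).symm)

theorem eq_inner_smul_of_orthonormal {ι V : Type*} [NormedAddCommGroup V] [InnerProductSpace ℝ V]
    {A : ι → V} (hA : Orthonormal ℝ A) {x : V} {i₀ : ι}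
    (hx : ∀ i, i ≠ i₀ → ⟪x, A i⟫ = 0)
    (hperp : ∀ w ∈ (Submodule.span ℝ (Set.range A))ᗮ, ⟪x, w⟫ = 0) :
    x = ⟪x, A i₀⟫ • A i₀ := by
  set y := x - ⟪x, A i₀⟫ • A i₀ with hy
  have hyA (i : ι) : ⟪y, A i⟫ = 0 := by
    classical
    rw [hy, inner_sub_left, real_inner_smul_left, orthonormal_iff_ite.mp hA]
    by_cases hi : i₀ = i
    · rw [hi, if_pos rfl, mul_one, sub_self]
    · rw [if_neg hi, hx i (Ne.symm hi), mul_zero, sub_zero]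
  have hyperp : y ∈ (Submodule.span ℝ (Set.range A))ᗮ := by
    have hspan : Submodule.span ℝ (Set.range A) ≤ (innerₛₗ ℝ y).ker := by
      rw [Submodule.span_le]
      rintro _ ⟨i, rfl⟩
      exact hyA i
    exact (Submodule.mem_orthogonal' _ _).mpr fun _ hu => hspan hu
  have hyy : ⟪y, y⟫ = 0 := by
    nth_rw 1 [hy]
    rw [inner_sub_left, real_inner_smul_left, hperp y hyperp, real_inner_comm y, hyA, mul_zero,
      sub_zero]
  exact sub_eq_zero.mp (inner_self_eq_zero.mp hyy)

variable {𝕜 V : Type*} [RCLike 𝕜] [NormedAddCommGroup V] [InnerProductSpace 𝕜 V]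

theorem orthogonal_eq_of_isOrtho_of_sup_eq_top {U W : Submodule 𝕜 V} (hUW : U ⟂ W)
    (htop : U ⊔ W = ⊤) : Uᗮ = W := by
  refine (eq_of_le_of_inf_le_of_sup_le hUW.symm (z := U) ?_ ?_).symm
  · exact U.orthogonal_disjoint.symm.le_bot.trans bot_le
  · exact le_top.trans (sup_comm U W ▸ htop).ge

theorem exists_orthonormalBasis_subordinate {ι : Type*} [Finite ι]
    [FiniteDimensional 𝕜 V] {W : ι → Submodule 𝕜 V}
    (hW : Pairwise fun i j => W i ⟂ W j) (htop : iSup W = ⊤) :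
    ∃ c : OrthonormalBasis (Fin (Module.finrank 𝕜 V)) 𝕜 V, ∀ m, ∃ i, c m ∈ W i := by
  classical
  have := Fintype.ofFinite ι
  have hfam := OrthogonalFamily.of_pairwise hW
  have hint : DirectSum.IsInternal W := hfam.isInternal_iff.mpr (by simp [htop])
  exact ⟨hint.subordinateOrthonormalBasis rfl hfam, fun m =>
    ⟨_, hint.subordinateOrthonormalBasis_subordinate rfl m hfam⟩⟩

end Decomposition

section Semidirect

variable {V : Type*} [NormedAddCommGroup V] [InnerProductSpace ℝ V]
  {br : V →ₗ[ℝ] V →ₗ[ℝ] V} {a r n : Submodule ℝ V} {D : V → n →ₗ[ℝ] n}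

theorem apply_mem_orthogonal_of_mem_orthogonal (hskew : ∀ x y, br x y = -br y x)
    (htop : a ⊔ r ⊔ n = ⊤) (hortho : a ⊔ r ⟂ n)
    (har : ∀ x ∈ a, ∀ y ∈ r, br x y = 0) (habel : ∀ x ∈ a, ∀ y ∈ a, br x y = 0)
    (hr : ∀ x ∈ r, ∀ y ∈ r, br x y ∈ r) {x y : V} (hx : x ∈ nᗮ) (hy : y ∈ nᗮ) :
    br x y ∈ nᗮ := by
  rw [orthogonal_eq_of_isOrtho_of_sup_eq_top hortho.symm (sup_comm n (a ⊔ r) ▸ htop)] at hx hy ⊢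
  obtain ⟨x₁, hx₁, x₂, hx₂, rfl⟩ := Submodule.mem_sup.mp hx
  obtain ⟨y₁, hy₁, y₂, hy₂, rfl⟩ := Submodule.mem_sup.mp hy
  rw [map_add, map_add, LinearMap.add_apply, LinearMap.add_apply, habel _ hx₁ _ hy₁,
    hskew x₂ y₁, har _ hy₁ _ hx₂, har _ hx₁ _ hy₂, neg_zero, add_zero, zero_add, zero_add]
  exact Submodule.mem_sup_right (hr _ hx₂ _ hy₂)

variable [FiniteDimensional ℝ V]

theorem trace_apply_eq_zero_of_mem_of_isAbelian (hskew : ∀ x y, br x y = -br y x)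
    (hD : ∀ x (v : n), (D x v : V) = br x v) (habel : ∀ x ∈ n, ∀ y ∈ n, br x y = 0) {w : V}
    (hw : w ∈ n) : LinearMap.trace ℝ V (br w) = 0 := by
  have hmem (x : V) : br w x ∈ n := by
    rw [hskew, ← hD x ⟨w, hw⟩]
    exact n.neg_mem (D x ⟨w, hw⟩).2
  rw [trace_eq_trace_of_forall_mem hmem (R := 0) fun v => (habel w hw v v.2).symm, map_zero]

theorem trace_apply_eq_trace_of_forall_apply_eq_zero {U : Submodule ℝ V} (htop : U ⊔ n = ⊤)
    (hD : ∀ x (v : n), (D x v : V) = br x v) {x : V} (hx : ∀ u ∈ U, br x u = 0) :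
    LinearMap.trace ℝ V (br x) = LinearMap.trace ℝ n (D x) := by
  refine trace_eq_trace_of_forall_mem (fun z => ?_) (hD x)
  obtain ⟨u, hu, v, hv, rfl⟩ := Submodule.mem_sup.mp (htop ▸ Submodule.mem_top : z ∈ U ⊔ n)
  rw [map_add, hx u hu, zero_add, ← hD x ⟨v, hv⟩]
  exact (D x ⟨v, hv⟩).2

theorem meanCurvature_eq_trace_smul (hskew : ∀ x y, br x y = -br y x) (htop : a ⊔ r ⊔ n = ⊤)
    (har : ∀ x ∈ a, ∀ y ∈ r, br x y = 0) (habel : ∀ x ∈ a, ∀ y ∈ a, br x y = 0)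
    (hnabel : ∀ x ∈ n, ∀ y ∈ n, br x y = 0) (hortho : a ⟂ r ⊔ n)
    (hD : ∀ x (v : n), (D x v : V) = br x v)
    (htrace : ∀ y ∈ r, LinearMap.trace ℝ V (br y) = 0)
    {ι : Type*} {A : ι → V} (hA : Orthonormal ℝ A) (hspan : Submodule.span ℝ (Set.range A) = a)
    {i₀ : ι} (htraceA : ∀ i, i ≠ i₀ → LinearMap.trace ℝ n (D (A i)) = 0)
    {H : V} (hH : ∀ w, ⟪H, w⟫ = LinearMap.trace ℝ V (br w)) :
    H = LinearMap.trace ℝ n (D (A i₀)) • A i₀ := by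
  have hinner (i : ι) : ⟪H, A i⟫ = LinearMap.trace ℝ n (D (A i)) := by
    have hAi : A i ∈ a := hspan ▸ Submodule.subset_span ⟨i, rfl⟩
    rw [hH, trace_apply_eq_trace_of_forall_apply_eq_zero htop hD fun u hu =>
      sup_le (c := (br (A i)).ker) (habel _ hAi) (har _ hAi) hu]
  have hperp : ∀ w ∈ (Submodule.span ℝ (Set.range A))ᗮ, ⟪H, w⟫ = 0 := by
    intro w hw
    rw [hspan, orthogonal_eq_of_isOrtho_of_sup_eq_top hortho (sup_assoc a r n ▸ htop)] at hw
    obtain ⟨y, hy, v, hv, rfl⟩ := Submodule.mem_sup.mp hw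
    rw [hH, map_add, map_add, htrace y hy,
      trace_apply_eq_zero_of_mem_of_isAbelian hskew hD hnabel hv, add_zero]
  rw [← hinner]
  exact eq_inner_smul_of_orthonormal hA (fun i hi => (hinner i).trans (htraceA i hi)) hperp

theorem exists_orthonormalBasis_isStarNormal {k p : Submodule ℝ V} (htop : a ⊔ (k ⊔ p) ⊔ n = ⊤)
    (hakp : a ⟂ k ⊔ p) (hn : a ⊔ (k ⊔ p) ⟂ n) (hkp : k ⟂ p)
    (ha : ∀ x ∈ a, IsStarNormal (D x)) (hk : ∀ x ∈ k, IsStarNormal (D x))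
    (hp : ∀ x ∈ p, IsStarNormal (D x)) (hD : ∀ x (v : n), (D x v : V) = br x v)
    (habel : ∀ x ∈ n, ∀ y ∈ n, br x y = 0) :
    ∃ c : OrthonormalBasis (Fin (Module.finrank ℝ V)) ℝ V, ∀ m, IsStarNormal (D (c m)) := by
  have hzero : ∀ x ∈ n, IsStarNormal (D x) := fun x hx => by
    rw [show D x = 0 from LinearMap.ext fun v => Subtype.ext ((hD x v).trans (habel x hx v v.2))]
    exact IsStarNormal.zero (R := Module.End ℝ n)
  obtain ⟨hak, hap⟩ := Submodule.isOrtho_sup_right.mp hakp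
  obtain ⟨han, hkpn⟩ := Submodule.isOrtho_sup_left.mp hn
  obtain ⟨hkn, hpn⟩ := Submodule.isOrtho_sup_left.mp hkpn
  obtain ⟨c, hc⟩ := exists_orthonormalBasis_subordinate (W := ![a, k, p, n])
    (by
      intro i j hij
      fin_cases i <;> fin_cases j <;>
        first
        | exact absurd rfl hij
        | assumption
        | exact Submodule.IsOrtho.symm ‹_›)
    (by
      rw [eq_top_iff, ← htop]
      exact sup_le (sup_le (le_iSup ![a, k, p, n] 0)
        (sup_le (le_iSup ![a, k, p, n] 1) (le_iSup ![a, k, p, n] 2))) (le_iSup ![a, k, p, n] 3))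
  refine ⟨c, fun m => ?_⟩
  obtain ⟨i, hi⟩ := hc m
  fin_cases i
  exacts [ha _ hi, hk _ hi, hp _ hi, hzero _ hi]

end Semidirect

theorem stmt19_general {ι κ E : Type*} [Fintype κ] [NormedAddCommGroup E] [InnerProductSpace ℝ E]
    [FiniteDimensional ℝ E]
    (br : E →ₗ[ℝ] E →ₗ[ℝ] E) (hskew : ∀ X Y, br X Y = -br Y X)
    (a r n k p : Submodule ℝ E) (htop : a ⊔ r ⊔ n = ⊤) (hkp : k ⊔ p = r)
    (har : ∀ A ∈ a, ∀ Y ∈ r, br A Y = 0)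
    (habel : ∀ A ∈ a, ∀ A' ∈ a, br A A' = 0)
    (hrsub : ∀ Y ∈ r, ∀ Y' ∈ r, br Y Y' ∈ r)
    (hnabel : ∀ x ∈ n, ∀ y ∈ n, br x y = 0)
    (har_ortho : a ⟂ r) (han_ortho : a ⟂ n) (hrn_ortho : r ⟂ n) (hkp_ortho : k ⟂ p)
    (adN : E → (n →ₗ[ℝ] n)) (hadN : ∀ x : E, ∀ v : n, (adN x v : E) = br x v)
    (hknormal : ∀ Y ∈ k, IsStarNormal (adN Y)) (hpnormal : ∀ Y ∈ p, IsStarNormal (adN Y))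
    (hanormal : ∀ A ∈ a, IsStarNormal (adN A))
    (hrtrace : ∀ Y ∈ r, LinearMap.trace ℝ E (br Y) = 0)
    (A : ι → E) (hAo : Orthonormal ℝ A) (hAspan : Submodule.span ℝ (Set.range A) = a)
    (i₀ : ι) (htr0 : ∀ i, i ≠ i₀ → LinearMap.trace ℝ n (adN (A i)) = 0)
    (hpos : IsPositiveStable (adN (A i₀)))
    (Hm : E) (hmean : ∀ W : E, ⟪Hm, W⟫ = LinearMap.trace ℝ E (br W))
    (b : OrthonormalBasis κ ℝ E) (Ric : E → E → ℝ)
    (hRic : ∀ x y, Ric x y =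
      -(1/2) * ∑ i, ∑ j, ⟪br x (b i), b j⟫ * ⟪br y (b i), b j⟫
      + (1/4) * ∑ i, ∑ j, ⟪br (b i) (b j), x⟫ * ⟪br (b i) (b j), y⟫
      - (1/2) * LinearMap.trace ℝ E (br x ∘ₗ br y)
      - (1/2) * (⟪br Hm x, y⟫ + ⟪x, br Hm y⟫)) :
    Hm = (LinearMap.trace ℝ n (adN (A i₀))) • A i₀ ∧
    (∀ X Y : n, Ric (X : E) (Y : E) =
      -(LinearMap.trace ℝ n (adN (A i₀))) *
        ⟪((1/2 : ℝ) • (adN (A i₀) + LinearMap.adjoint (adN (A i₀)))) X, Y⟫) ∧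
    (∀ X : n, X ≠ 0 → Ric (X : E) (X : E) < 0) := by
  have hH := meanCurvature_eq_trace_smul hskew htop har habel hnabel
    (Submodule.isOrtho_sup_right.mpr ⟨har_ortho, han_ortho⟩) hadN hrtrace hAo hAspan htr0 hmean
  have hn_ortho : a ⊔ r ⟂ n := Submodule.isOrtho_sup_left.mpr ⟨han_ortho, hrn_ortho⟩
  obtain ⟨c, hc⟩ := exists_orthonormalBasis_isStarNormal (hkp ▸ htop) (hkp ▸ har_ortho)
    (hkp ▸ hn_ortho) hkp_ortho hanormal hknormal hpnormal hadN hnabel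
  have hRicn (X Y : n) : Ric X Y = -LinearMap.trace ℝ n (adN (A i₀)) *
      ((1/2) * (⟪adN (A i₀) X, Y⟫ + ⟪X, adN (A i₀) Y⟫)) := by
    have hzero : unimodularRicci br X Y = 0 :=
      unimodularRicci_eq_zero_of_isStarNormal hskew hadN hnabel (fun _ hx _ hy =>
        apply_mem_orthogonal_of_mem_orthogonal hskew htop hn_ortho har habel hrsub hx hy) c hc X Y
    rw [hRic, ← unimodularRicci_eq_sum, hzero, hH]
    simp only [map_smul, LinearMap.smul_apply, real_inner_smul_left, real_inner_smul_right,
      Submodule.coe_inner, hadN]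
    ring
  refine ⟨hH, fun X Y => ?_, fun X hX => ?_⟩
  · rw [hRicn, LinearMap.smul_apply, real_inner_smul_left, ← LinearMap.star_eq_adjoint,
      inner_add_star_apply]
  · have : Nontrivial n := ⟨X, 0, hX⟩
    have := hanormal (A i₀) (hAspan ▸ Submodule.subset_span ⟨i₀, rfl⟩)
    rw [hRicn, real_inner_comm (adN (A i₀) X) X]
    linarith [mul_pos hpos.trace_pos (hpos.inner_apply_self_pos hX)]

/-- For `g = (a ⊕ r) ⋉ n` with `n` abelian, `[a,r] = 0`, orthogonal Cartan
decomposition `r = k ⊕ p` acting skew-symmetrically/symmetrically on `n`,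
normal `ad a|_n`, `Ric_r < 0` with `Ric_r(k,p) = 0`, and a basis `A₁,…,A_K` of
`a` with `tr(ad A_i|_n) = 0` for `i ≥ 2` and all eigenvalues of `ad A₁|_n` of
positive real part: the mean curvature vector is `H = tr(ad A₁|_n)·A₁` and
`Ric|_n = -tr(ad A₁|_n)·S(ad A₁|_n)` is negative definite on `n`. -/
theorem stmt19 {E : Type*} [NormedAddCommGroup E] [InnerProductSpace ℝ E]
    [FiniteDimensional ℝ E] {Nb q K : ℕ}
    (br : E →ₗ[ℝ] E →ₗ[ℝ] E)
    (hskew : ∀ X Y, br X Y = - br Y X)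
    (hjac : ∀ X Y Z, br X (br Y Z) + br Y (br Z X) + br Z (br X Y) = 0)
    (a r n k p : Submodule ℝ E)
    (hcompl : IsCompl (a ⊔ r) n) (hkp : k ⊔ p = r) (hkpdisj : Disjoint k p)
    (har : ∀ A ∈ a, ∀ Y ∈ r, br A Y = 0)            -- `[a, r] = 0`
    (habel : ∀ A ∈ a, ∀ A' ∈ a, br A A' = 0)        -- `a` abelian
    (hrsub : ∀ Y ∈ r, ∀ Y' ∈ r, br Y Y' ∈ r)        -- `r` a subalgebra
    (hnideal : ∀ x : E, ∀ y ∈ n, br x y ∈ n)        -- `n` an ideal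
    (hnabel : ∀ x ∈ n, ∀ y ∈ n, br x y = 0)         -- `n` abelian
    -- orthogonality of `a`, `r`, `n` and of `k`, `p`
    (horth1 : ∀ x ∈ a, ∀ y ∈ r, ⟪x, y⟫ = 0)
    (horth2 : ∀ x ∈ a, ∀ y ∈ n, ⟪x, y⟫ = 0)
    (horth3 : ∀ x ∈ r, ∀ y ∈ n, ⟪x, y⟫ = 0)
    (horth4 : ∀ x ∈ k, ∀ y ∈ p, ⟪x, y⟫ = 0)
    -- actions on `n`
    (adN : E → (n →ₗ[ℝ] n)) (hadN : ∀ x : E, ∀ v : n, (adN x v : E) = br x v)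
    (hknskew : ∀ Y ∈ k, LinearMap.adjoint (adN Y) = - adN Y)
    (hpnsym : ∀ Y ∈ p, LinearMap.adjoint (adN Y) = adN Y)
    (hanormal : ∀ A ∈ a,
      adN A ∘ₗ LinearMap.adjoint (adN A) = LinearMap.adjoint (adN A) ∘ₗ adN A)
    -- the Ricci form of the subalgebra `r` (with mean curvature zero) is
    -- negative definite and vanishes on `k × p`
    (bR : OrthonormalBasis (Fin q) ℝ r)
    (RicR : E → E → ℝ)
    (hRicR : ∀ x y, RicR x y =
      -(1/2) * ∑ i, ∑ j, ⟪br x (bR i : E), (bR j : E)⟫ * ⟪br y (bR i : E), (bR j : E)⟫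
      + (1/4) * ∑ i, ∑ j, ⟪br (bR i : E) (bR j : E), x⟫ * ⟪br (bR i : E) (bR j : E), y⟫
      - (1/2) * ∑ i, ⟪br x (br y (bR i : E)), (bR i : E)⟫)
    (hRicneg : ∀ Y ∈ r, Y ≠ 0 → RicR Y Y < 0)
    (hRickp : ∀ Y ∈ k, ∀ X ∈ p, RicR Y X = 0)
    -- the orthonormal basis `A₀, A₁, …` of `a`
    (A : Fin (K + 1) → E) (hAo : Orthonormal ℝ A) (hAmem : ∀ i, A i ∈ a)
    (hAspan : Submodule.span ℝ (Set.range A) = a)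
    (htr0 : ∀ i : Fin (K + 1), i ≠ 0 → LinearMap.trace ℝ n (adN (A i)) = 0)
    -- all eigenvalues of `ad A₀|_n` have positive real part
    (heig : ∀ z : ℂ, (((adN (A 0)).charpoly).map (algebraMap ℝ ℂ)).IsRoot z → 0 < z.re)
    -- the mean curvature vector and the full Ricci form of `g`
    (Hm : E) (hmean : ∀ W : E, ⟪Hm, W⟫ = LinearMap.trace ℝ E (br W))
    (b : OrthonormalBasis (Fin Nb) ℝ E)
    (Ric : E → E → ℝ)
    (hRic : ∀ x y, Ric x y =
      -(1/2) * ∑ i, ∑ j, ⟪br x (b i), b j⟫ * ⟪br y (b i), b j⟫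
      + (1/4) * ∑ i, ∑ j, ⟪br (b i) (b j), x⟫ * ⟪br (b i) (b j), y⟫
      - (1/2) * LinearMap.trace ℝ E (br x ∘ₗ br y)
      - (1/2) * (⟪br Hm x, y⟫ + ⟪x, br Hm y⟫)) :
    -- conclusion: `H = tr(ad A₀|_n)·A₀` and
    -- `Ric|_n = -tr(ad A₀|_n)·S(ad A₀|_n)` is negative definite on `n`
    Hm = (LinearMap.trace ℝ n (adN (A 0))) • A 0 ∧
    (∀ X Y : n, Ric (X : E) (Y : E) =
      -(LinearMap.trace ℝ n (adN (A 0))) *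
        ⟪((1/2 : ℝ) • (adN (A 0) + LinearMap.adjoint (adN (A 0)))) X, Y⟫) ∧
    (∀ X : n, X ≠ 0 → Ric (X : E) (X : E) < 0) := by
  have hrtrace : ∀ Y ∈ r, LinearMap.trace ℝ E (br Y) = 0 := fun Y hY =>
    trace_apply_eq_zero_of_unimodularRicci_neg hskew hjac hrsub (fun x hx => by
      rw [unimodularRicci_restrictBracket_eq_sum hrsub bR, ← hRicR]
      exact hRicneg x x.2 (Submodule.coe_eq_zero.not.mpr hx)) hY
  exact stmt19_general br hskew a r n k p hcompl.sup_eq_top hkp har habel hrsub hnabel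
    (Submodule.isOrtho_iff_inner_eq.mpr horth1) (Submodule.isOrtho_iff_inner_eq.mpr horth2)
    (Submodule.isOrtho_iff_inner_eq.mpr horth3) (Submodule.isOrtho_iff_inner_eq.mpr horth4)
    adN hadN (fun Y hY => skewAdjoint.isStarNormal_of_mem (hknskew Y hY))
    (fun Y hY => IsSelfAdjoint.isStarNormal (hpnsym Y hY)) (fun B hB => ⟨(hanormal B hB).symm⟩)
    hrtrace A hAo hAspan 0 htr0 heig Hm hmean b Ric hRic
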